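/- Let q be a prime power with q ≡ 1 (mod 4), let χ_4 be a multiplicative character of F_q^* of order 4, and let A be a multiplicative character of F_q^* with A^8 ≠ ε. Then _6F_6(χ_4, χ̄_4, χ_4 A, χ̄_4 A, χ_4 Ā, χ̄_4 Ā; ε, φ, Ā, φĀ, A, φA | 1)_q = 1 + Σ_{R: R^2 = φ} g(R̄ φ A^2) g(R̄ φ Ā^2) / g(R̄)^2 + E, where E = Σ_{S: S^2 = χ_4} g(S A) g(χ_4 S A) / ( g(φ S A) g(χ̄_4 S A) ) if q ≡ 1 (mod 8), and E = 0 otherwise; here the sums are over multiplicative characters R with R^2 = φ and S with S^2 = χ_4, respectively. -/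

import Mathlib

/-- The finite field hypergeometric function `ₘFₘ` of McCarthy, with upper parameters `A`,
lower parameters `B` (indexed by a finite type `ι`), and argument `lam`. -/
noncomputable def ffHyp {F : Type} [Field F] [Fintype F] (θ : AddChar F ℂ)
    {ι : Type} [Fintype ι] (A B : ι → MulChar F ℂ) (lam : F) : ℂ :=
  letI : Fintype (MulChar F ℂ) := Fintype.ofFinite _
  (-1 : ℂ) / ((Fintype.card F : ℂ) - 1) *
    ∑ χ : MulChar F ℂ,
      (∏ i, (gaussSum (A i * χ) θ / gaussSum (A i) θ) *
        (gaussSum ((B i * χ)⁻¹) θ / gaussSum ((B i)⁻¹) θ)) *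
      χ (-1) ^ (Fintype.card ι) * χ lam

/-!
Let `J(ψ) = jacobiSum (φψ²) (ψ²)⁻¹`. The Hasse–Davenport formula, applied to `χ₄ψ` and to `ψ⁻¹`,
shows that `J(ψ)` is proportional to the product of the Gauss sums of `χ₄ψ`, `χ₄⁻¹ψ`, `ψ⁻¹` and
`(φψ)⁻¹`. Since `J(1) = -1` and `J(A) J(A⁻¹) = q`, the hypergeometric value is therefore
`(q (q - 1))⁻¹ ∑ ψ, J(ψ) J(Aψ) J(A⁻¹ψ)`.

`J(ψ)` depends on `ψ²` only, so orthogonality leaves one sum over `s` of `A²(s)` times a quadratic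
character sum for each of the two square roots `±1` of `1`. For `-1` the quadratic character sum
reduces to that of the cubic `s(1 - s)m(m² - s)`, which orthogonality over the square roots of `φ`
recognises as the sum over `R`. For `+1` it is `∑ x, χ₄(x) φ(x + x⁻¹ + s + s⁻¹)`, recognised in the
same way as the sum over the square roots `S` of `χ₄`, which is empty unless `q ≡ 1 (mod 8)`, except
that `s = -1` contributes an extra `q`, which gives the constant term `1`.
-/

/-! ### Quadratic characters -/

section QuadraticCharacter

section CommRing

variable {F R : Type*} [Field F] [CommRing R] {φ : MulChar F R}

theorem ne_one_of_orderOf_eq_two (hφ : orderOf φ = 2) : φ ≠ 1 := by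
  rintro rfl
  simp at hφ

theorem mul_self_eq_one_of_orderOf_eq_two (hφ : orderOf φ = 2) : φ * φ = 1 := by
  rw [← sq, ← hφ, pow_orderOf_eq_one]

theorem apply_neg_one_of_sq_eq {χ ψ : MulChar F R} (h : χ ^ 2 = ψ) : ψ (-1) = 1 := by
  rw [← h, MulChar.pow_apply' _ two_ne_zero, ← map_pow, neg_one_sq, map_one]

theorem quadratic_apply_sq (hφ : orderOf φ = 2) {r : F} (hr : r ≠ 0) : φ (r ^ 2) = 1 := by
  rw [map_pow, ← MulChar.pow_apply' _ two_ne_zero, ← hφ, pow_orderOf_eq_one,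
    MulChar.one_apply (isUnit_iff_ne_zero.mpr hr)]

theorem quadratic_apply_mul_sq (hφ : orderOf φ = 2) (x : F) {r : F} (hr : r ≠ 0) :
    φ (x * r ^ 2) = φ x := by
  rw [map_mul, quadratic_apply_sq hφ hr, mul_one]

theorem card_mod_eight_eq_one_of_sq_sq_eq [Fintype F] {χ S : MulChar F R} (hφ : orderOf φ = 2)
    (hχ : χ ^ 2 = φ) (hS : S ^ 2 = χ) : Fintype.card F % 8 = 1 := by
  have h_pow : S ^ 2 ^ 2 = φ := by rw [← hχ, ← hS, ← pow_mul]; rfl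
  have h_order : orderOf S = 2 ^ (2 + 1) :=
    orderOf_eq_prime_pow (h_pow ▸ ne_one_of_orderOf_eq_two hφ)
      (by rw [pow_succ 2 2, pow_mul, h_pow, ← hφ, pow_orderOf_eq_one])
  have h_dvd := MulChar.orderOf_dvd_card_sub_one F S
  have h_card : 1 < Fintype.card F := Fintype.one_lt_card
  rw [h_order] at h_dvd
  omega

variable [Finite F]

theorem ringChar_ne_two_of_orderOf_eq_two (hφ : orderOf φ = 2) : ringChar F ≠ 2 := by
  have := Fintype.ofFinite F
  intro h
  have h_even : Fintype.card F % 2 = 0 := FiniteField.even_card_of_char_two h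
  have h_dvd : 2 ∣ Fintype.card F - 1 := by
    simpa only [hφ, Nat.card_eq_fintype_card] using MulChar.orderOf_dvd_card_sub_one F φ
  have h_card : 1 < Fintype.card F := Fintype.one_lt_card
  omega

theorem two_ne_zero_of_orderOf_eq_two (hφ : orderOf φ = 2) : (2 : F) ≠ 0 :=
  Ring.two_ne_zero (ringChar_ne_two_of_orderOf_eq_two hφ)

theorem isUnit_four_of_orderOf_eq_two (hφ : orderOf φ = 2) : IsUnit (4 : F) := by
  rw [isUnit_iff_ne_zero, show (4 : F) = 2 ^ 2 by norm_num]
  exact pow_ne_zero 2 (two_ne_zero_of_orderOf_eq_two hφ)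

end CommRing

variable {F R : Type*} [Field F] [CommRing R] [IsDomain R] {φ : MulChar F R}

theorem quadratic_apply_generator (hφ : orderOf φ = 2) {g : Fˣ}
    (hg : ∀ x, x ∈ Subgroup.zpowers g) : φ g = -1 := by
  have h_sq : φ g * φ g = 1 := by
    rw [← MulChar.mul_apply, mul_self_eq_one_of_orderOf_eq_two hφ, MulChar.one_apply_coe]
  refine (mul_self_eq_one_iff.mp h_sq).resolve_left fun h => ne_one_of_orderOf_eq_two hφ ?_
  rw [MulChar.eq_iff hg, h, MulChar.one_apply_coe]

section Finite

variable [Finite F]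

theorem eq_of_orderOf_eq_two {ψ : MulChar F R} (hφ : orderOf φ = 2) (hψ : orderOf ψ = 2) :
    φ = ψ := by
  obtain ⟨g, hg⟩ := IsCyclic.exists_generator (α := Fˣ)
  rw [MulChar.eq_iff hg, quadratic_apply_generator hφ hg, quadratic_apply_generator hψ hg]

theorem neg_one_ne_one_of_orderOf_eq_two (hφ : orderOf φ = 2) : (-1 : R) ≠ 1 := by
  obtain ⟨g, hg⟩ := IsCyclic.exists_generator (α := Fˣ)
  intro h
  refine ne_one_of_orderOf_eq_two hφ ?_
  rw [MulChar.eq_iff hg, quadratic_apply_generator hφ hg, h, MulChar.one_apply_coe]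

end Finite

section Fintype

variable [Fintype F]

theorem apply_eq_quadraticChar [DecidableEq F] (hφ : orderOf φ = 2) (a : F) :
    φ a = (quadraticChar F a : ℤ) := by
  have h_quad : orderOf (quadraticChar F) = 2 :=
    orderOf_eq_prime (quadraticChar_isQuadratic F).sq_eq_one
      (quadraticChar_ne_one (ringChar_ne_two_of_orderOf_eq_two hφ))
  suffices h_eq : φ = (quadraticChar F).ringHomComp (Int.castRingHom R) by rw [h_eq]; rfl
  obtain ⟨g, hg⟩ := IsCyclic.exists_generator (α := Fˣ)
  rw [MulChar.eq_iff hg, quadratic_apply_generator hφ hg, MulChar.ringHomComp_apply,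
    quadratic_apply_generator h_quad hg, map_neg, map_one]

theorem card_sq_eq [DecidableEq F] (hφ : orderOf φ = 2) (a : F) :
    (Finset.card {y : F | y ^ 2 = a} : R) = 1 + φ a := by
  have h := congrArg (Int.cast : ℤ → R)
    (quadraticChar_card_sqrts (ringChar_ne_two_of_orderOf_eq_two hφ) a)
  rw [Set.toFinset_ofPred] at h
  rw [apply_eq_quadraticChar hφ, add_comm]
  exact_mod_cast h

theorem sum_comp_sq (hφ : orderOf φ = 2) (f : F → R) :
    ∑ y, f (y ^ 2) = ∑ u, (1 + φ u) * f u := by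
  classical
  rw [← Finset.sum_fiberwise Finset.univ (· ^ 2)]
  refine Finset.sum_congr rfl fun u _ => ?_
  rw [← card_sq_eq hφ, ← nsmul_eq_mul, ← Finset.sum_const]
  exact Finset.sum_congr rfl fun y hy => by rw [(Finset.mem_filter.mp hy).2]

end Fintype

theorem quartic_apply_neg_one [Finite F] {χ : MulChar F R} (hφ : orderOf φ = 2) (hχ : χ ^ 2 = φ) :
    χ (-1) = φ 2 := by
  classical
  have := Fintype.ofFinite F
  have h_neg : φ (-1) = 1 := apply_neg_one_of_sq_eq hχ
  obtain ⟨i, hi⟩ : IsSquare (-1 : F) := by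
    by_contra h_nonsq
    rw [apply_eq_quadraticChar hφ, quadraticChar_neg_one_iff_not_isSquare.mpr h_nonsq] at h_neg
    exact neg_one_ne_one_of_orderOf_eq_two hφ (by exact_mod_cast h_neg)
  have hi' : 1 + i ≠ 0 := fun h =>
    two_ne_zero_of_orderOf_eq_two hφ (by linear_combination -hi + (1 - i) * h)
  calc χ (-1) = φ i := by rw [hi, map_mul, ← sq, ← hχ, MulChar.pow_apply' _ two_ne_zero]
    _ = φ (-1 * i * (1 + i) ^ 2) := by
      rw [quadratic_apply_mul_sq hφ _ hi', map_mul, h_neg, one_mul]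
    _ = φ 2 := by
      congr 1
      linear_combination (2 + i) * hi

end QuadraticCharacter

/-! ### Sums of quadratic characters of polynomials -/

section Substitution

variable {F M : Type*} [Field F] [Fintype F]

theorem sum_comp_affine [AddCommMonoid M] (f : F → M) {a : F} (ha : a ≠ 0) (b : F) :
    ∑ x, f (a * x + b) = ∑ x, f x :=
  ((Equiv.mulLeft₀ a ha).trans (Equiv.addRight b)).sum_comp f

variable [DecidableEq F]

theorem sum_units_eq_sub [AddCommGroup M] (f : F → M) : ∑ u : Fˣ, f u = ∑ x, f x - f 0 := by
  rw [← Finset.sum_erase_eq_sub (Finset.mem_univ 0),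
    Finset.sum_subtype (Finset.univ.erase 0) (p := fun x : F => x ≠ 0) (by simp)]
  exact unitsEquivNeZero.sum_comp fun x : {x : F // x ≠ 0} => f x

theorem card_joukowski_fiber (h2 : (2 : F) ≠ 0) {s : F} (hs : s ≠ 0) (T : F) :
    Finset.card {n : Fˣ | s * n + (n : F)⁻¹ = T} = Finset.card {y : F | y ^ 2 = T ^ 2 - 4 * s} := by
  have h2s : 2 * s ≠ 0 := mul_ne_zero h2 hs
  refine Finset.card_bij (fun n _ => 2 * s * n - T) (fun n hn => ?_) (fun n _ m _ h => ?_)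
    (fun y hy => ?_)
  · obtain rfl : s * n + (n : F)⁻¹ = T := by simpa only [Finset.mem_filter_univ] using hn
    rw [Finset.mem_filter_univ]
    field_simp
    ring
  · exact Units.ext (mul_left_cancel₀ h2s (sub_left_injective h))
  · rw [Finset.mem_filter_univ] at hy
    have hn : T + y ≠ 0 := fun h =>
      mul_ne_zero h2 h2s (by linear_combination (T - y) * h + hy)
    refine ⟨Units.mk0 ((T + y) / (2 * s)) (div_ne_zero hn h2s), ?_, ?_⟩
    · rw [Finset.mem_filter_univ, Units.val_mk0]
      field_simp
      linear_combination hy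
    · rw [Units.val_mk0]
      field_simp
      ring

variable {R : Type*} [CommRing R] [IsDomain R] {φ : MulChar F R}

theorem sum_comp_joukowski (hφ : orderOf φ = 2) {s : F} (hs : s ≠ 0) (f : F → R) :
    ∑ n : Fˣ, f (s * n + (n : F)⁻¹) = ∑ T, (1 + φ (T ^ 2 - 4 * s)) * f T := by
  rw [← Finset.sum_fiberwise Finset.univ fun n : Fˣ => s * n + (n : F)⁻¹]
  refine Finset.sum_congr rfl fun T _ => ?_
  rw [← card_sq_eq hφ, ← card_joukowski_fiber (two_ne_zero_of_orderOf_eq_two hφ) hs,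
    ← nsmul_eq_mul, ← Finset.sum_const]
  exact Finset.sum_congr rfl fun n hn => by rw [(Finset.mem_filter.mp hn).2]

end Substitution

section QuadraticSums

variable {F R : Type*} [Field F] [Fintype F] [CommRing R] {φ : MulChar F R}

theorem sum_quadratic_sub_sq_mul (hφ : orderOf φ = 2) (g : F → F) (a : F) :
    ∑ z, φ ((z - a) ^ 2 * g z) = ∑ z, φ (g z) - φ (g a) := by
  classical
  rw [← Finset.sum_erase_eq_sub (Finset.mem_univ a),
    ← Finset.sum_erase (a := a) _ (by simp [MulChar.map_zero])]
  refine Finset.sum_congr rfl fun z hz => ?_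
  rw [mul_comm, quadratic_apply_mul_sq hφ _ (sub_ne_zero.mpr (Finset.ne_of_mem_erase hz))]

theorem sum_quadratic_sq_sub_four_mul_cubic (hφ : orderOf φ = 2) (h_neg : φ (-1) = 1) (c : F) :
    ∑ z, φ ((z ^ 2 - 4) * ((z + 2) * (z ^ 2 + c - 2))) =
      ∑ z, φ ((z + 2) * (z ^ 2 + c - 2)) - φ (c + 2) := by
  have h_reflect : ∑ z, φ ((z - 2) * (z ^ 2 + c - 2)) = ∑ z, φ ((z + 2) * (z ^ 2 + c - 2)) := by
    rw [← Equiv.sum_comp (Equiv.neg F)]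
    refine Finset.sum_congr rfl fun z _ => ?_
    rw [← one_mul (φ ((z + 2) * _)), ← h_neg, ← map_mul, Equiv.neg_apply]
    congr 1
    ring
  have h_end : φ ((-2 - 2) * ((-2) ^ 2 + c - 2)) = φ (c + 2) := by
    rw [← one_mul (φ (c + 2)), ← h_neg, ← map_mul,
      ← quadratic_apply_mul_sq hφ (-1 * _) (two_ne_zero_of_orderOf_eq_two hφ)]
    congr 1
    ring
  rw [← h_reflect, ← h_end,
    ← sum_quadratic_sub_sq_mul hφ (fun z => (z - 2) * (z ^ 2 + c - 2)) (-2)]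
  refine Finset.sum_congr rfl fun z _ => congrArg φ ?_
  ring

theorem sum_quadratic_sq_sub_four_mul_mul (hφ : orderOf φ = 2) (h_neg : φ (-1) = 1) {s : F}
    (hs : s ≠ 0) (hs1 : s + 1 ≠ 0) :
    ∑ T, φ ((T ^ 2 - 4 * s) * (T * (T + (s + 1)))) =
      φ s * φ 2 * (∑ z, φ ((z + 2) * (z ^ 2 - (s + s⁻¹ + 2))) - φ 2 * φ s) := by
  classical
  have h2 := two_ne_zero_of_orderOf_eq_two hφ
  have h_term : ∀ z : Fˣ, φ (((2 * (s + 1) * (z : F)⁻¹) ^ 2 - 4 * s) *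
      (2 * (s + 1) * (z : F)⁻¹ * (2 * (s + 1) * (z : F)⁻¹ + (s + 1)))) =
      φ s * φ 2 * φ ((z + 2) * ((z : F) ^ 2 - (s + s⁻¹ + 2))) := by
    intro z
    rw [← one_mul (φ s), ← h_neg, ← map_mul, ← map_mul, ← map_mul, ← quadratic_apply_mul_sq hφ
      (-1 * s * 2 * _) (div_ne_zero (mul_ne_zero h2 hs1) (pow_ne_zero 2 z.ne_zero))]
    congr 1
    field_simp
    ring
  have h_zero : φ ((0 + 2) * (0 ^ 2 - (s + s⁻¹ + 2))) = φ 2 * φ s := by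
    rw [← one_mul (φ 2), ← h_neg, ← map_mul, ← map_mul,
      ← quadratic_apply_mul_sq hφ (-1 * 2 * s) (div_ne_zero hs1 hs)]
    congr 1
    field_simp
    ring
  rw [← h_zero, ← sum_units_eq_sub fun z => φ ((z + 2) * (z ^ 2 - (s + s⁻¹ + 2))),
    Finset.mul_sum, ← Finset.sum_congr rfl fun z _ => h_term z,
    sum_units_eq_sub fun z => φ (((2 * (s + 1) * z⁻¹) ^ 2 - 4 * s) *
      (2 * (s + 1) * z⁻¹ * (2 * (s + 1) * z⁻¹ + (s + 1)))),
    inv_zero, mul_zero, zero_mul, mul_zero, MulChar.map_zero, sub_zero]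
  exact (Equiv.sum_comp ((Equiv.inv F).trans (Equiv.mulLeft₀ _ (mul_ne_zero h2 hs1))) fun T =>
    φ ((T ^ 2 - 4 * s) * (T * (T + (s + 1))))).symm

variable [IsDomain R]

theorem sum_quadratic_sq_sub_four_mul (hφ : orderOf φ = 2) {s : F} (hs : s ≠ 0) :
    ∑ T, φ (T ^ 2 - 4 * s) = -1 := by
  classical
  have h := sum_comp_joukowski hφ hs fun _ => 1
  rw [sum_units_eq_sub fun _ => (1 : R)] at h
  simp only [mul_one, Finset.sum_add_distrib] at h
  linear_combination -h

theorem sum_quadratic_mul_add (hφ : orderOf φ = 2) {a : F} (ha : a ≠ 0) :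
    ∑ T, φ (T * (T + a)) = -1 := by
  have h2 := two_ne_zero_of_orderOf_eq_two hφ
  calc ∑ T, φ (T * (T + a)) = ∑ T, φ ((2 * T + a) ^ 2 - 4 * (a / 2) ^ 2) := by
        refine Finset.sum_congr rfl fun T _ => ?_
        rw [← quadratic_apply_mul_sq hφ _ h2]
        congr 1
        field_simp
        ring
    _ = ∑ T, φ (T ^ 2 - 4 * (a / 2) ^ 2) :=
      sum_comp_affine (fun T => φ (T ^ 2 - 4 * (a / 2) ^ 2)) h2 a
    _ = -1 := sum_quadratic_sq_sub_four_mul hφ (pow_ne_zero 2 (div_ne_zero ha h2))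

end QuadraticSums

/-! ### Transforms over the multiplicative group -/

section CharTransform

variable {F R : Type*} [Field F] [Fintype F] [DecidableEq F] [CommRing R]

/-- The transform `ψ ↦ ∑ u, ψ(u) f(u)` of a function `f` on the multiplicative group of a finite
field. Jacobi sums are of this form (`jacobiSum_eq_charTransform`), which turns sums of products of
Jacobi sums over characters into sums over field elements. -/
def charTransform (f : Fˣ → R) (ψ : MulChar F R) : R := ∑ u : Fˣ, ψ u * f u

theorem charTransform_mul (f : Fˣ → R) (ψ χ : MulChar F R) :
    charTransform f (ψ * χ) = charTransform (fun u => χ u * f u) ψ :=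
  Finset.sum_congr rfl fun u _ => by rw [MulChar.mul_apply, mul_assoc]

theorem charTransform_comp_neg (f : Fˣ → R) (ψ : MulChar F R) :
    charTransform (fun u => f (-u)) ψ = ψ (-1) * charTransform f ψ := by
  rw [charTransform, charTransform, Finset.mul_sum, ← Equiv.sum_comp (Equiv.neg Fˣ)]
  refine Finset.sum_congr rfl fun u _ => ?_
  rw [Equiv.neg_apply, neg_neg, Units.val_neg, neg_eq_neg_one_mul, map_mul, mul_assoc]

theorem charTransform_comp_inv (f : Fˣ → R) (ψ : MulChar F R) :
    charTransform (fun u => f u⁻¹) ψ = charTransform f ψ⁻¹ := by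
  rw [charTransform, charTransform, ← Equiv.sum_comp (Equiv.inv Fˣ)]
  refine Finset.sum_congr rfl fun u _ => ?_
  rw [Equiv.inv_apply, inv_inv, MulChar.inv_apply', Units.val_inv_eq_inv_val]

theorem charTransform_mul_charTransform (f g : Fˣ → R) (ψ : MulChar F R) :
    charTransform f ψ * charTransform g ψ = ∑ u : Fˣ, ∑ m : Fˣ, ψ m * (f u * g (m / u)) := by
  rw [charTransform, charTransform, Finset.sum_mul_sum]
  refine Finset.sum_congr rfl fun u _ => ?_
  rw [← Equiv.sum_comp (Equiv.divRight u)]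
  refine Finset.sum_congr rfl fun m _ => ?_
  rw [Equiv.divRight_apply, mul_mul_mul_comm, ← map_mul, ← Units.val_mul, mul_div_cancel]

theorem charTransform_mul_charTransform_inv (g h : Fˣ → R) (B ψ : MulChar F R) :
    charTransform g (B * ψ) * charTransform h (B⁻¹ * ψ) =
      ∑ s : Fˣ, ∑ w : Fˣ, B s * (g (s * w) * h w) * ψ ((s * w ^ 2 : Fˣ) : F) := by
  rw [charTransform, charTransform, Finset.sum_mul_sum, Finset.sum_comm]
  nth_rw 2 [Finset.sum_comm]
  refine Finset.sum_congr rfl fun w _ => ?_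
  rw [← Equiv.sum_comp (Equiv.mulRight w)]
  refine Finset.sum_congr rfl fun s _ => ?_
  have h_cancel : B (s * w) * B⁻¹ w = B s := by
    rw [map_mul, mul_assoc, ← MulChar.mul_apply, mul_inv_cancel, MulChar.one_apply_coe, mul_one]
  rw [Equiv.coe_mulRight, MulChar.mul_apply, MulChar.mul_apply]
  push_cast
  rw [show (s * w ^ 2 : F) = s * w * w by ring, map_mul ψ (s * w : F), ← h_cancel]
  ring

theorem jacobiSum_eq_charTransform (a b : MulChar F R) :
    jacobiSum a b = charTransform (fun u : Fˣ => (a * b)⁻¹ (1 + u)) a := by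
  rw [charTransform, sum_units_eq_sub fun x => a x * (a * b)⁻¹ (1 + x), MulChar.map_zero, zero_mul,
    sub_zero, ← sum_comp_affine _ one_ne_zero (-1), ← Equiv.sum_comp (Equiv.inv F), jacobiSum_comm]
  refine Finset.sum_congr rfl fun x _ => ?_
  rcases eq_or_ne x 0 with rfl | hx
  · simp [MulChar.map_zero]
  · rw [Equiv.inv_apply, one_mul, add_neg_cancel_comm_assoc, MulChar.inv_apply', inv_inv,
      MulChar.mul_apply, ← mul_assoc, ← map_mul, mul_comm (b x), add_mul, inv_mul_cancel₀ hx,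
      neg_one_mul, sub_eq_add_neg]

theorem sum_units_mulChar [IsDomain R] [DecidableEq (MulChar F R)] (ψ : MulChar F R) :
    ∑ u : Fˣ, ψ u = if ψ = 1 then (Fintype.card Fˣ : R) else 0 := by
  rw [sum_units_eq_sub fun x => ψ x, MulChar.map_zero, sub_zero]
  split_ifs with hψ
  · rw [hψ, MulChar.sum_one_eq_card_units]
  · exact MulChar.sum_eq_zero_of_ne_one hψ

section Orthogonality

variable [Fintype (MulChar F R)] [HasEnoughRootsOfUnity R (Monoid.exponent Fˣ)] [IsDomain R]

theorem sum_mulChar_apply (x : Fˣ) :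
    ∑ χ : MulChar F R, χ x = if x = 1 then (Fintype.card Fˣ : R) else 0 := by
  split_ifs with hx
  · have h_card := MulChar.card_eq_card_units_of_hasEnoughRootsOfUnity F R
    rw [Nat.card_eq_fintype_card, Nat.card_eq_fintype_card] at h_card
    simp only [hx, Units.val_one, map_one, Finset.sum_const, Finset.card_univ, h_card,
      nsmul_eq_mul, mul_one]
  · obtain ⟨ψ, hψ⟩ := MulChar.exists_apply_ne_one_of_hasEnoughRootsOfUnity F R
      (Units.val_eq_one.not.mpr hx)
    refine eq_zero_of_mul_eq_self_left hψ ?_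
    simp only [Finset.mul_sum, ← MulChar.mul_apply]
    exact Equiv.sum_comp (Equiv.mulLeft ψ) fun χ : MulChar F R => χ x

theorem sum_charTransform_sq_mul_apply (h2 : (2 : F) ≠ 0) (f : Fˣ → R) (x : Fˣ) :
    ∑ χ : MulChar F R, charTransform f (χ ^ 2) * (χ ^ 2) x =
      Fintype.card Fˣ * (f x⁻¹ + f (-x⁻¹)) := by
  have h_neg : x⁻¹ ≠ -x⁻¹ := fun h => by
    have h_val : (↑x⁻¹ : F) = -↑x⁻¹ := congrArg Units.val h
    exact mul_ne_zero h2 x⁻¹.ne_zero (by linear_combination h_val)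
  calc
    _ = ∑ u : Fˣ, f u * ∑ χ : MulChar F R, χ ((u * x) ^ 2 : Fˣ) := by
      simp only [charTransform, Finset.sum_mul, Finset.mul_sum]
      rw [Finset.sum_comm]
      refine Finset.sum_congr rfl fun u _ => Finset.sum_congr rfl fun χ _ => ?_
      push_cast
      rw [MulChar.pow_apply_coe, MulChar.pow_apply_coe, map_pow, map_mul]
      ring
    _ = ∑ u ∈ {x⁻¹, -x⁻¹}, f u * Fintype.card Fˣ := by
      simp only [sum_mulChar_apply, mul_ite, mul_zero]
      rw [← Finset.sum_filter]
      congr 1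
      ext u
      simp only [Finset.mem_filter_univ, Finset.mem_insert, Finset.mem_singleton]
      rw [sq, ← inv_eq_iff_mul_eq_one, Units.inv_eq_self_iff, ← eq_inv_iff_mul_eq_one,
        ← eq_mul_inv_iff_mul_eq, neg_one_mul]
    _ = _ := by
      rw [Finset.sum_pair h_neg]
      ring

theorem sum_charTransform_triple (h2 : (2 : F) ≠ 0) (f g h : Fˣ → R) (B : MulChar F R) :
    ∑ χ : MulChar F R,
        charTransform f (χ ^ 2) * (charTransform g (B * χ ^ 2) * charTransform h (B⁻¹ * χ ^ 2)) =
      Fintype.card Fˣ * ∑ s : Fˣ, B s *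
        ∑ w : Fˣ, (f (s * w ^ 2)⁻¹ + f (-(s * w ^ 2)⁻¹)) * (g (s * w) * h w) := by
  calc
    _ = ∑ s : Fˣ, ∑ w : Fˣ, B s * (g (s * w) * h w) *
          ∑ χ : MulChar F R, charTransform f (χ ^ 2) * (χ ^ 2) ((s * w ^ 2 : Fˣ) : F) := by
      simp only [charTransform_mul_charTransform_inv, Finset.mul_sum]
      rw [Finset.sum_comm]
      refine Finset.sum_congr rfl fun s _ => ?_
      rw [Finset.sum_comm]
      exact Finset.sum_congr rfl fun w _ => Finset.sum_congr rfl fun χ _ => by ring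
    _ = _ := by
      simp only [sum_charTransform_sq_mul_apply h2, Finset.mul_sum]
      exact Finset.sum_congr rfl fun s _ => Finset.sum_congr rfl fun w _ => by ring

variable [DecidableEq (MulChar F R)] [CharZero R]

theorem sum_sqrt_mulChar_apply (C : MulChar F R) (m : Fˣ) :
    ∑ S : MulChar F R with S ^ 2 = C, S m = ∑ n : Fˣ with n ^ 2 = m, C n := by
  refine mul_left_cancel₀ (Nat.cast_ne_zero.mpr (Fintype.card_ne_zero (α := Fˣ))) ?_
  calc (Fintype.card Fˣ : R) * ∑ S : MulChar F R with S ^ 2 = C, S m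
      = ∑ S : MulChar F R, ∑ n : Fˣ, (S ^ 2 * C⁻¹) n * S m := by
        rw [Finset.mul_sum, Finset.sum_filter]
        refine Finset.sum_congr rfl fun S _ => ?_
        simp only [← Finset.sum_mul, sum_units_mulChar, mul_inv_eq_one, ite_mul, zero_mul]
    _ = ∑ n : Fˣ, C⁻¹ n * ∑ S : MulChar F R, S ((n ^ 2 * m : Fˣ) : F) := by
        rw [Finset.sum_comm]
        simp only [Finset.mul_sum]
        refine Finset.sum_congr rfl fun n _ => Finset.sum_congr rfl fun S _ => ?_
        rw [Units.val_mul, Units.val_pow_eq_pow_val, map_mul, map_pow, MulChar.mul_apply,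
          MulChar.pow_apply_coe]
        ring
    _ = Fintype.card Fˣ * ∑ n : Fˣ with n ^ 2 = m, C n := by
        rw [← Equiv.sum_comp (Equiv.inv Fˣ), Finset.mul_sum, Finset.sum_filter]
        refine Finset.sum_congr rfl fun n _ => ?_
        simp only [Equiv.inv_apply, sum_mulChar_apply, inv_pow, inv_mul_eq_one, MulChar.inv_apply',
          Units.val_inv_eq_inv_val, inv_inv, ite_mul, zero_mul, mul_comm (C n)]

theorem sum_sqrt_charTransform_mul_charTransform (C : MulChar F R) (f g : Fˣ → R) :
    ∑ S : MulChar F R with S ^ 2 = C, charTransform f S * charTransform g S =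
      ∑ u : Fˣ, ∑ n : Fˣ, C n * (f u * g (n ^ 2 / u)) := by
  simp only [charTransform_mul_charTransform]
  rw [Finset.sum_comm]
  refine Finset.sum_congr rfl fun u _ => ?_
  rw [Finset.sum_comm, ← Finset.sum_fiberwise (s := Finset.univ) (g := fun n : Fˣ => n ^ 2)
    (f := fun n => C n * (f u * g (n ^ 2 / u)))]
  refine Finset.sum_congr rfl fun m _ => ?_
  rw [← Finset.sum_mul, sum_sqrt_mulChar_apply, Finset.sum_mul]
  exact Finset.sum_congr rfl fun n hn => by rw [(Finset.mem_filter.mp hn).2]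

end Orthogonality

end CharTransform

/-! ### Well-poised sums -/

section WellPoisedSum

variable {F R : Type*} [Field F] [Fintype F] [DecidableEq F] [CommRing R]

/-- The sum `∑ w, φ(s(sw² + ε)(1 + sw)(1 + w))` over `w ≠ 0`. For `φ` quadratic and `ε = ±1` these
are the inner sums of the triple character sum that `₆F₆` amounts to. -/
def wellPoisedSum (φ : MulChar F R) (ε s : F) : R :=
  ∑ w : Fˣ, φ (s * (s * w ^ 2 + ε) * ((1 + s * w) * (1 + w)))

variable {φ : MulChar F R}

theorem wellPoisedSum_neg_one_eq_sum_cubic (hφ : orderOf φ = 2) (h_neg : φ (-1) = 1) {s : F}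
    (hs : s ≠ 0) :
    wellPoisedSum φ (-1) s =
      ∑ t, φ (s * (1 - (1 - s) * t) * ((1 - t) ^ 2 - s * t ^ 2)) - 2 * φ s := by
  have h_zero : φ (s * (s * (0 : F) ^ 2 + -1) * ((1 + s * 0) * (1 + 0))) = φ s := by
    rw [← mul_one (φ s), ← h_neg, ← map_mul]
    congr 1
    ring
  have h_term : ∀ t : F, φ (s * (s * (s⁻¹ * t⁻¹ + -s⁻¹) ^ 2 + -1) *
      ((1 + s * (s⁻¹ * t⁻¹ + -s⁻¹)) * (1 + (s⁻¹ * t⁻¹ + -s⁻¹)))) =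
      φ (s * (1 - (1 - s) * t) * ((1 - t) ^ 2 - s * t ^ 2)) - if t = 0 then φ s else 0 := by
    intro t
    split_ifs with ht
    · simp [ht, hs, MulChar.map_zero]
    · rw [sub_zero, ← quadratic_apply_mul_sq hφ _ (mul_ne_zero hs (pow_ne_zero 2 ht))]
      congr 1
      field_simp
      ring
  -- The substitution is `t = 1 / (1 + s * w)`.
  rw [wellPoisedSum, sum_units_eq_sub fun w => φ (s * (s * w ^ 2 + -1) * ((1 + s * w) * (1 + w))),
    h_zero, ← sum_comp_affine _ (inv_ne_zero hs) (-s⁻¹), ← Equiv.sum_comp (Equiv.inv F)]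
  simp only [Equiv.inv_apply, h_term, Finset.sum_sub_distrib, Finset.sum_ite_eq',
    Finset.mem_univ, if_true]
  ring

variable [IsDomain R]

theorem wellPoisedSum_neg_one (hφ : orderOf φ = 2) (h_neg : φ (-1) = 1) {s : F} (hs : s ≠ 0) :
    wellPoisedSum φ (-1) s = ∑ m, φ (s * (1 - s) * m * (m ^ 2 - s)) - 2 * φ s := by
  rw [wellPoisedSum_neg_one_eq_sum_cubic hφ h_neg hs]
  congr 1
  rcases eq_or_ne s 1 with rfl | hs1
  · have h_linear : ∑ t, φ (-2 * t + 1) = 0 :=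
      (sum_comp_affine φ (neg_ne_zero.mpr (two_ne_zero_of_orderOf_eq_two hφ)) 1).trans
        (MulChar.sum_eq_zero_of_ne_one (ne_one_of_orderOf_eq_two hφ))
    simp only [sub_self, mul_zero, zero_mul, MulChar.map_zero, Finset.sum_const_zero]
    rw [← h_linear]
    refine Finset.sum_congr rfl fun t _ => congrArg φ ?_
    ring
  · rw [← sum_comp_affine (fun m => φ (s * (1 - s) * m * (m ^ 2 - s)))
      (neg_ne_zero.mpr (sub_ne_zero.mpr hs1.symm)) 1]
    refine Finset.sum_congr rfl fun t _ => ?_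
    rw [← quadratic_apply_mul_sq hφ _ (sub_ne_zero.mpr hs1.symm)]
    congr 1
    ring

end WellPoisedSum

section QuarticTransform

variable {F R : Type*} [Field F] [Fintype F] [DecidableEq F] [CommRing R]

/-- The transform at `χ` of `x ↦ φ(x + x⁻¹ + c)`, of interest when `φ` is quadratic and
`χ² = φ`. -/
def quarticTransform (φ χ : MulChar F R) (c : F) : R :=
  charTransform (fun x => φ ((x : F) + (x : F)⁻¹ + c)) χ

variable {φ χ : MulChar F R}

theorem quarticTransform_neg (h_neg : φ (-1) = 1) (c : F) :
    quarticTransform φ χ (-c) = χ (-1) * quarticTransform φ χ c := by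
  rw [quarticTransform, quarticTransform, ← charTransform_comp_neg]
  congr 1
  funext x
  rw [← one_mul (φ _), ← h_neg, ← map_mul, Units.val_neg, inv_neg]
  congr 1
  ring

variable [IsDomain R]

theorem two_mul_quarticTransform (hφ : orderOf φ = 2) (hχ : χ ^ 2 = φ) (c : F) :
    2 * quarticTransform φ χ c = ∑ y : Fˣ, φ (y * ((y : F) ^ 2 + ((y : F) ^ 2)⁻¹ + c)) := by
  have h_inv : χ * φ = χ⁻¹ := by
    rw [eq_inv_iff_mul_eq_one, mul_right_comm, ← sq, hχ, mul_self_eq_one_of_orderOf_eq_two hφ]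
  have h_symm : charTransform (fun x : Fˣ => φ ((x : F) + (x : F)⁻¹ + c)) (χ * φ) =
      quarticTransform φ χ c := by
    rw [h_inv, ← charTransform_comp_inv, quarticTransform]
    simp only [Units.val_inv_eq_inv_val, inv_inv, add_comm]
  calc 2 * quarticTransform φ χ c
      = ∑ u : Fˣ, (1 + φ u) * (χ u * φ (u + (u : F)⁻¹ + c)) := by
        nth_rw 1 [two_mul, ← h_symm]
        rw [charTransform, quarticTransform, charTransform, ← Finset.sum_add_distrib]
        refine Finset.sum_congr rfl fun u _ => ?_
        rw [MulChar.mul_apply]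
        ring
    _ = ∑ y : Fˣ, χ ((y : F) ^ 2) * φ ((y : F) ^ 2 + ((y : F) ^ 2)⁻¹ + c) := by
        rw [sum_units_eq_sub fun u => (1 + φ u) * (χ u * φ (u + u⁻¹ + c)),
          sum_units_eq_sub fun y => χ (y ^ 2) * φ (y ^ 2 + (y ^ 2)⁻¹ + c),
          sum_comp_sq hφ fun u => χ u * φ (u + u⁻¹ + c), zero_pow two_ne_zero, MulChar.map_zero]
        ring
    _ = _ := by
        refine Finset.sum_congr rfl fun y _ => ?_
        rw [map_pow, ← MulChar.pow_apply_coe, hχ, ← map_mul]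

theorem sum_joukowski_quadratic_mul (hφ : orderOf φ = 2) (h_neg : φ (-1) = 1) (c : F) :
    ∑ y : Fˣ, φ (y * ((y : F) ^ 2 + ((y : F) ^ 2)⁻¹ + c)) =
      2 * ∑ z, φ ((z + 2) * (z ^ 2 + c - 2)) := by
  have h_term : ∀ y : Fˣ, φ (y * ((y : F) ^ 2 + ((y : F) ^ 2)⁻¹ + c)) =
      φ ((1 * y + (y : F)⁻¹ + 2) * ((1 * y + (y : F)⁻¹) ^ 2 + c - 2)) +
        if y = -1 then φ (c + 2) else 0 := by
    intro y
    split_ifs with hy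
    · rw [hy, ← one_mul (φ (c + 2)), ← h_neg, ← map_mul, Units.val_neg, Units.val_one, inv_neg_one,
        one_mul, show (-1 + -1 + 2 : F) = 0 by ring, zero_mul, MulChar.map_zero, zero_add,
        neg_one_sq, inv_one]
      congr 1
      ring
    · have hy' : (y : F) + 1 ≠ 0 := fun h => hy (Units.ext (eq_neg_of_add_eq_zero_left h))
      rw [add_zero, ← quadratic_apply_mul_sq hφ _ (div_ne_zero hy' y.ne_zero)]
      congr 1
      field_simp
      ring
  simp only [h_term, Finset.sum_add_distrib, Finset.sum_ite_eq', Finset.mem_univ, if_true]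
  rw [sum_comp_joukowski hφ one_ne_zero fun z => φ ((z + 2) * (z ^ 2 + c - 2))]
  simp only [add_mul _ _ (φ _), one_mul, mul_one, ← map_mul, Finset.sum_add_distrib]
  rw [sum_quadratic_sq_sub_four_mul_cubic hφ h_neg]
  ring

theorem quarticTransform_eq_sum_cubic (hφ : orderOf φ = 2) (hχ : χ ^ 2 = φ) (c : F) :
    quarticTransform φ χ c = φ 2 * ∑ z, φ ((z + 2) * (z ^ 2 - (c + 2))) := by
  have h_neg : φ (-1) = 1 := apply_neg_one_of_sq_eq hχ
  have h2 : (2 : R) ≠ 0 := fun h => neg_one_ne_one_of_orderOf_eq_two hφ (by linear_combination -h)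
  refine mul_left_cancel₀ h2 ?_
  rw [← neg_neg c, quarticTransform_neg h_neg, quartic_apply_neg_one hφ hχ, mul_left_comm,
    two_mul_quarticTransform hφ hχ, sum_joukowski_quadratic_mul hφ h_neg, mul_left_comm 2]
  simp only [neg_neg, sub_add_eq_sub_sub, ← sub_eq_add_neg]

theorem quarticTransform_neg_two (hφ : orderOf φ = 2) (hχ : χ ^ 2 = φ) :
    quarticTransform φ χ (-2) = -1 := by
  have h2 := two_ne_zero_of_orderOf_eq_two hφ
  have h_shift : ∑ z, φ (z + 2) = 0 := (Equiv.sum_comp (Equiv.addRight 2) φ).trans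
    (MulChar.sum_eq_zero_of_ne_one (ne_one_of_orderOf_eq_two hφ))
  have h_sum := sum_quadratic_sub_sq_mul hφ (· + 2) 0
  simp only [h_shift, sub_zero, zero_add, zero_sub] at h_sum
  rw [quarticTransform_eq_sum_cubic hφ hχ, neg_add_cancel]
  simp only [sub_zero, mul_comm (_ + _)]
  rw [h_sum, mul_neg, ← map_mul, ← sq, quadratic_apply_sq hφ h2]

theorem quarticTransform_add_inv (hφ : orderOf φ = 2) (hχ : χ ^ 2 = φ) {s : F} (hs : s ≠ 0)
    (hs1 : s + 1 ≠ 0) :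
    quarticTransform φ χ (s + s⁻¹) =
      φ s * (∑ T, φ ((T ^ 2 - 4 * s) * (T * (T + (s + 1)))) + 1) := by
  have h_sq : ∀ {x : F}, x ≠ 0 → φ x ^ 2 = 1 := fun hx => by
    rw [← map_pow, quadratic_apply_sq hφ hx]
  rw [quarticTransform_eq_sum_cubic hφ hχ,
    sum_quadratic_sq_sub_four_mul_mul hφ (apply_neg_one_of_sq_eq hχ) hs hs1]
  linear_combination (-φ 2 * ∑ z, φ ((z + 2) * (z ^ 2 - (s + s⁻¹ + 2)))) * h_sq hs +
    φ s * (h_sq hs * φ 2 ^ 2 + h_sq (two_ne_zero_of_orderOf_eq_two hφ))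

end QuarticTransform

section WellPoisedSum

variable {F R : Type*} [Field F] [Fintype F] [DecidableEq F] [CommRing R] [IsDomain R]
  {φ χ : MulChar F R}

theorem wellPoisedSum_one (hφ : orderOf φ = 2) {s : F} (hs : s ≠ 0) :
    wellPoisedSum φ 1 s = φ s * (∑ T, φ (T * (T + (s + 1))) +
      ∑ T, φ ((T ^ 2 - 4 * s) * (T * (T + (s + 1))))) := by
  have h_term : ∀ w : Fˣ, φ (s * (s * w ^ 2 + 1) * ((1 + s * w) * (1 + w))) =
      φ s * φ ((s * w + (w : F)⁻¹) * ((s * w + (w : F)⁻¹) + (s + 1))) := by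
    intro w
    rw [← map_mul, ← quadratic_apply_mul_sq hφ (s * _) w.ne_zero]
    congr 1
    field_simp
    ring
  rw [wellPoisedSum, Finset.sum_congr rfl fun w _ => h_term w, ← Finset.mul_sum,
    sum_comp_joukowski hφ hs fun T => φ (T * (T + (s + 1))), ← Finset.sum_add_distrib]
  simp only [add_mul, one_mul, map_mul]

theorem wellPoisedSum_one_eq_quarticTransform (hφ : orderOf φ = 2) (hχ : χ ^ 2 = φ) {s : F}
    (hs : s ≠ 0) :
    wellPoisedSum φ 1 s =
      quarticTransform φ χ (s + s⁻¹) - 2 * φ s + if s = -1 then (Fintype.card F : R) else 0 := by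
  rw [wellPoisedSum_one hφ hs]
  split_ifs with hs1
  · have h2 := two_ne_zero_of_orderOf_eq_two hφ
    have h_neg : φ (-1) = 1 := apply_neg_one_of_sq_eq hχ
    have h_first := sum_quadratic_sub_sq_mul hφ (fun _ => 1) 0
    have h_second := sum_quadratic_sub_sq_mul hφ (· ^ 2 - 4 * (-1)) 0
    have h_four : φ (0 ^ 2 - 4 * (-1)) = 1 := by
      rw [← quadratic_apply_sq hφ h2]
      congr 1
      ring
    rw [sum_quadratic_sq_sub_four_mul hφ (neg_ne_zero.mpr one_ne_zero), h_four] at h_second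
    simp only [sub_zero, mul_one, map_one, Finset.sum_const, Finset.card_univ,
      nsmul_eq_mul] at h_first h_second
    rw [hs1, h_neg, neg_add_cancel, inv_neg_one, ← neg_add, one_add_one_eq_two,
      quarticTransform_neg_two hφ hχ]
    simp only [add_zero, ← sq, mul_comm (_ - _), one_mul]
    rw [h_first, h_second]
    ring
  · have hs1' : s + 1 ≠ 0 := fun h => hs1 (eq_neg_of_add_eq_zero_left h)
    rw [quarticTransform_add_inv hφ hχ hs hs1', sum_quadratic_mul_add hφ hs1']
    ring

end WellPoisedSum

/-! ### Sums of products of Jacobi sums -/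

section JacobiSumSums

variable {F R : Type*} [Field F] [CommRing R] {φ χ : MulChar F R}

theorem quartic_mul_apply_div_mul_apply_mul (hφ : orderOf φ = 2) (hχ : χ ^ 2 = φ)
    (A : MulChar F R) (x n : Fˣ) :
    χ n * (A ((n / x : Fˣ)) * φ (1 + (n / x : Fˣ)) *
        ((χ * A) (n * x : Fˣ) * φ (1 + (n * x : Fˣ)))) =
      (A ^ 2) n * (χ x * φ ((x : F) + (x : F)⁻¹ + (n + (n : F)⁻¹))) := by
  rw [← quadratic_apply_mul_sq hφ (_ + _ + _) n.ne_zero]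
  have h_arg : ((x : F) + (x : F)⁻¹ + (n + (n : F)⁻¹)) * (n : F) ^ 2 =
      n * (1 + (n / x : Fˣ)) * (1 + (n * x : Fˣ)) := by
    push_cast
    field_simp
    ring
  have h_sq : A ((n / x : Fˣ)) * A ((n * x : Fˣ)) = (A ^ 2) n := by
    rw [← map_mul, ← Units.val_mul, div_mul_mul_cancel, MulChar.pow_apply_coe, sq, Units.val_mul,
      map_mul]
  rw [h_arg, ← h_sq, map_mul φ, map_mul φ, ← hχ, MulChar.pow_apply_coe, MulChar.mul_apply,
    Units.val_mul n x, map_mul χ]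
  ring

variable [Fintype F] [DecidableEq F]

theorem jacobiSum_mul_of_mul_eq (hφ : orderOf φ = 2) {S X Y : MulChar F R} (h : S * X * Y = φ) :
    jacobiSum (S * X) Y = charTransform (fun u : Fˣ => X u * φ (1 + u)) S := by
  rw [jacobiSum_eq_charTransform, charTransform_mul, h, inv_eq_self_of_orderOf_eq_two hφ]

theorem jacobiSum_quadratic_mul_inv (hφ : orderOf φ = 2) (ψ : MulChar F R) :
    jacobiSum (φ * ψ) ψ⁻¹ = charTransform (fun u : Fˣ => φ (u * (1 + u))) ψ := by
  simp only [mul_comm φ, jacobiSum_mul_of_mul_eq hφ (mul_inv_cancel_comm ψ φ), map_mul]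

section Sqrt

variable [Fintype (MulChar F R)] [DecidableEq (MulChar F R)] [CharZero R] [IsDomain R]
  [HasEnoughRootsOfUnity R (Monoid.exponent Fˣ)]

theorem sum_sqrt_jacobiSum_mul_jacobiSum_self (hφ : orderOf φ = 2) (h_neg : φ (-1) = 1)
    {B : MulChar F R} (hB : B (-1) = 1) :
    ∑ S : MulChar F R with S ^ 2 = φ, jacobiSum (S * B) (S * B⁻¹) * jacobiSum S S =
      ∑ s : Fˣ, B s * ∑ m, φ (s * (1 - s) * m * (m ^ 2 - s)) := by
  have h_term : ∀ u n : Fˣ, φ n * (B u * φ (1 + u) * φ (1 + (n ^ 2 / u : Fˣ))) =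
      B u * φ (u * (1 + u) * n * (n ^ 2 + u)) := by
    intro u n
    rw [mul_left_comm, mul_assoc, ← map_mul, ← map_mul,
      ← quadratic_apply_mul_sq hφ _ u.ne_zero]
    congr 2
    push_cast
    field_simp
    ring
  calc ∑ S : MulChar F R with S ^ 2 = φ, jacobiSum (S * B) (S * B⁻¹) * jacobiSum S S
      = ∑ S : MulChar F R with S ^ 2 = φ, charTransform (fun u : Fˣ => B u * φ (1 + u)) S *
          charTransform (fun u : Fˣ => φ (1 + u)) S := by
        refine Finset.sum_congr rfl fun S hS => ?_
        have hS' : S * S = φ := by rw [← sq, (Finset.mem_filter.mp hS).2]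
        have h_mul : S * B * (S * B⁻¹) = φ := by rw [mul_mul_mul_comm, mul_inv_cancel, mul_one, hS']
        rw [jacobiSum_mul_of_mul_eq hφ h_mul, jacobiSum_eq_charTransform, hS',
          inv_eq_self_of_orderOf_eq_two hφ]
    _ = ∑ u : Fˣ, B u * ∑ n : Fˣ, φ (u * (1 + u) * n * (n ^ 2 + u)) := by
        simp only [sum_sqrt_charTransform_mul_charTransform, h_term, Finset.mul_sum]
    _ = ∑ s : Fˣ, B s * ∑ m, φ (s * (1 - s) * m * (m ^ 2 - s)) := by
        rw [← Equiv.sum_comp (Equiv.neg Fˣ)]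
        refine Finset.sum_congr rfl fun s _ => ?_
        rw [Equiv.neg_apply, Units.val_neg, ← neg_one_mul (s : F), map_mul B, hB, one_mul,
          sum_units_eq_sub fun n => φ (-1 * s * (1 + -1 * s) * n * (n ^ 2 + -1 * s)), mul_zero,
          zero_mul, MulChar.map_zero, sub_zero]
        congr 1
        refine Finset.sum_congr rfl fun m _ => ?_
        rw [← one_mul (φ (s * _ * m * _)), ← h_neg, ← map_mul]
        congr 1
        ring

theorem sum_sqrt_jacobiSum_mul_jacobiSum_quartic (hφ : orderOf φ = 2) (hχ : χ ^ 2 = φ)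
    (A : MulChar F R) :
    ∑ S : MulChar F R with S ^ 2 = χ,
        jacobiSum (S * A) (S ^ 3 * A⁻¹) * jacobiSum (S ^ 3 * A) (S * A⁻¹) =
      ∑ s : Fˣ, (A ^ 2) s * quarticTransform φ χ (s + (s : F)⁻¹) := by
  calc _ = ∑ S : MulChar F R with S ^ 2 = χ, charTransform (fun u : Fˣ => A u * φ (1 + u)) S *
          charTransform (fun u : Fˣ => (χ * A) u * φ (1 + u)) S := by
        refine Finset.sum_congr rfl fun S hS => ?_
        have hS' : S ^ 2 = χ := (Finset.mem_filter.mp hS).2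
        have h_pow : S ^ 4 = φ := by rw [← hχ, ← hS', ← pow_mul]
        have h_left : S * A * (S ^ 3 * A⁻¹) = φ := by
          rw [mul_mul_mul_comm, mul_inv_cancel, mul_one, ← pow_succ', h_pow]
        have h_right : S * (χ * A) * (S * A⁻¹) = φ := by
          rw [mul_mul_mul_comm, mul_inv_cancel_right, ← hS', ← sq, ← pow_add, h_pow]
        rw [jacobiSum_mul_of_mul_eq hφ h_left, pow_succ' S 2, hS', mul_assoc S χ A,
          jacobiSum_mul_of_mul_eq hφ h_right]
    _ = ∑ n : Fˣ, ∑ x : Fˣ, χ n * (A ((n / x : Fˣ)) * φ (1 + (n / x : Fˣ)) *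
      ((χ * A) (n ^ 2 / (n / x) : Fˣ) * φ (1 + (n ^ 2 / (n / x) : Fˣ)))) := by
        rw [sum_sqrt_charTransform_mul_charTransform, Finset.sum_comm]
        refine Finset.sum_congr rfl fun n _ => ?_
        exact (Equiv.sum_comp (Equiv.divLeft n) _).symm
    _ = _ := by
        have h_div : ∀ n x : Fˣ, n ^ 2 / (n / x) = n * x := fun n x => by
          rw [div_div_eq_mul_div, sq, mul_assoc, mul_div_cancel_left]
        simp only [h_div, quartic_mul_apply_div_mul_apply_mul hφ hχ, quarticTransform,
          charTransform, Finset.mul_sum]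

end Sqrt

section Triple

variable [Fintype (MulChar F R)] [IsDomain R] [HasEnoughRootsOfUnity R (Monoid.exponent Fˣ)]

theorem sum_jacobiSum_triple_eq_wellPoisedSum (hφ : orderOf φ = 2) (h_neg : φ (-1) = 1)
    (B : MulChar F R) :
    ∑ ψ : MulChar F R, jacobiSum (φ * ψ ^ 2) (ψ ^ 2)⁻¹ *
        (jacobiSum (φ * (B * ψ ^ 2)) (B * ψ ^ 2)⁻¹ *
          jacobiSum (φ * (B⁻¹ * ψ ^ 2)) (B⁻¹ * ψ ^ 2)⁻¹) =
      Fintype.card Fˣ * ∑ s : Fˣ, B s * (wellPoisedSum φ 1 s + wellPoisedSum φ (-1) s) := by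
  simp only [jacobiSum_quadratic_mul_inv hφ]
  rw [sum_charTransform_triple (two_ne_zero_of_orderOf_eq_two hφ)]
  have h_inv : ∀ x : Fˣ, φ ((x⁻¹ : Fˣ) * (1 + (x⁻¹ : Fˣ))) = φ (x + 1) := fun x => by
    rw [← quadratic_apply_mul_sq hφ _ x.ne_zero]
    congr 1
    push_cast
    field_simp
  have h_neg_inv : ∀ x : Fˣ, φ ((-x⁻¹ : Fˣ) * (1 + (-x⁻¹ : Fˣ))) = φ (x + -1) := fun x => by
    rw [← one_mul (φ (x + -1)), ← h_neg, ← map_mul, ← quadratic_apply_mul_sq hφ _ x.ne_zero]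
    congr 1
    push_cast
    field_simp
  have h_prod : ∀ s w : Fˣ, φ ((s * w : Fˣ) * (1 + (s * w : Fˣ))) * φ (w * (1 + w)) =
      φ s * φ ((1 + s * w) * (1 + w)) := fun s w => by
    rw [← map_mul, ← map_mul, ← quadratic_apply_mul_sq hφ (s * _) w.ne_zero]
    congr 1
    push_cast
    ring
  simp only [h_inv, h_neg_inv, h_prod, wellPoisedSum, ← Finset.sum_add_distrib]
  congr 2
  funext s
  congr 1
  refine Finset.sum_congr rfl fun w _ => ?_
  push_cast
  simp only [map_mul]
  ring

end Triple

variable [Fintype (MulChar F R)] [DecidableEq (MulChar F R)] [CharZero R] [IsDomain R]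
  [HasEnoughRootsOfUnity R (Monoid.exponent Fˣ)]

theorem sum_jacobiSum_triple (hφ : orderOf φ = 2) (hχ : χ ^ 2 = φ) {A : MulChar F R}
    (hA : A ^ 2 * φ ≠ 1) :
    ∑ ψ : MulChar F R, jacobiSum (φ * ψ ^ 2) (ψ ^ 2)⁻¹ *
        (jacobiSum (φ * (A ^ 2 * ψ ^ 2)) (A ^ 2 * ψ ^ 2)⁻¹ *
          jacobiSum (φ * ((A ^ 2)⁻¹ * ψ ^ 2)) ((A ^ 2)⁻¹ * ψ ^ 2)⁻¹) =
      Fintype.card Fˣ * (Fintype.card F +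
        ∑ S : MulChar F R with S ^ 2 = φ,
          jacobiSum (S * A ^ 2) (S * (A ^ 2)⁻¹) * jacobiSum S S +
        ∑ S : MulChar F R with S ^ 2 = χ,
          jacobiSum (S * A) (S ^ 3 * A⁻¹) * jacobiSum (S ^ 3 * A) (S * A⁻¹)) := by
  have h_neg : φ (-1) = 1 := apply_neg_one_of_sq_eq hχ
  have hA_neg : (A ^ 2) (-1) = 1 := apply_neg_one_of_sq_eq rfl
  have h_quad : ∑ s : Fˣ, (A ^ 2) s * φ s = 0 := by
    simp only [← MulChar.mul_apply, sum_units_mulChar, if_neg hA]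
  have h_point : ∑ s : Fˣ, (A ^ 2) s * (if (s : F) = -1 then (Fintype.card F : R) else 0) =
      Fintype.card F := by
    have h_val : ∀ s : Fˣ, (s : F) = -1 ↔ s = -1 := fun s => by
      rw [← Units.val_inj, Units.val_neg, Units.val_one]
    simp only [h_val, mul_ite, mul_zero, Finset.sum_ite_eq', Finset.mem_univ, if_true]
    rw [Units.val_neg, Units.val_one, hA_neg, one_mul]
  rw [sum_jacobiSum_triple_eq_wellPoisedSum hφ h_neg,
    sum_sqrt_jacobiSum_mul_jacobiSum_self hφ h_neg hA_neg,
    sum_sqrt_jacobiSum_mul_jacobiSum_quartic hφ hχ]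
  congr 1
  rw [← sub_zero (_ + _ + _), ← mul_zero 4, ← h_quad, ← h_point, Finset.mul_sum,
    ← Finset.sum_add_distrib, ← Finset.sum_add_distrib, ← Finset.sum_sub_distrib]
  refine Finset.sum_congr rfl fun s _ => ?_
  rw [wellPoisedSum_neg_one hφ h_neg s.ne_zero,
    wellPoisedSum_one_eq_quarticTransform hφ hχ s.ne_zero]
  ring

end JacobiSumSums

/-! ### Gauss sums -/

section GaussSums

section IsDomain

variable {F R : Type*} [Field F] [Fintype F] [CommRing R] [IsDomain R] {θ : AddChar F R}
  {φ ψ : MulChar F R}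

theorem apply_four_mul_jacobiSum_self (hφ : orderOf φ = 2) (hψ : ψ ≠ 1) :
    ψ 4 * jacobiSum ψ ψ = jacobiSum φ ψ := by
  have h2 : (2 : F) ≠ 0 := two_ne_zero_of_orderOf_eq_two hφ
  have h_zero : ∑ u, ψ (1 - u) = 0 := by
    rw [← MulChar.sum_eq_zero_of_ne_one hψ, ← Equiv.sum_comp (Equiv.subLeft 1) ψ]
    rfl
  calc ψ 4 * jacobiSum ψ ψ = ∑ x, ψ (1 - (2 * x + -1) ^ 2) := by
        rw [jacobiSum, Finset.mul_sum]
        refine Finset.sum_congr rfl fun x _ => ?_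
        rw [← map_mul, ← map_mul]
        congr 1
        ring
    _ = ∑ y, ψ (1 - y ^ 2) := sum_comp_affine (fun y => ψ (1 - y ^ 2)) h2 (-1)
    _ = ∑ u, (1 + φ u) * ψ (1 - u) := sum_comp_sq hφ fun u => ψ (1 - u)
    _ = jacobiSum φ ψ := by
        simp only [add_mul, one_mul, Finset.sum_add_distrib, h_zero, zero_add, jacobiSum]

theorem gaussSum_mul_gaussSum_inv (hθ : θ ≠ 1) (hψ : ψ ≠ 1) :
    gaussSum ψ θ * gaussSum ψ⁻¹ θ = ψ (-1) * Fintype.card F := by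
  rw [← mul_gaussSum_inv_eq_gaussSum ψ⁻¹, mul_left_comm,
    gaussSum_mul_gaussSum_eq_card hψ (AddChar.IsPrimitive.of_ne_one hθ), MulChar.inv_apply',
    inv_neg_one]

theorem gaussSum_sq_of_orderOf_eq_two (hθ : θ ≠ 1) (hφ : orderOf φ = 2) (h_neg : φ (-1) = 1) :
    gaussSum φ θ ^ 2 = Fintype.card F := by
  have h := gaussSum_mul_gaussSum_inv hθ (ne_one_of_orderOf_eq_two hφ)
  rwa [inv_eq_self_of_orderOf_eq_two hφ, h_neg, one_mul, ← sq] at h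

end IsDomain

variable {F K : Type*} [Field F] [Fintype F] [Field K] [CharZero K] {θ : AddChar F K}
  {φ χ : MulChar F K}

theorem gaussSum_ne_zero (hθ : θ ≠ 1) (ψ : MulChar F K) : gaussSum ψ θ ≠ 0 := by
  rcases eq_or_ne ψ 1 with rfl | hψ
  · rw [gaussSum_one_left hθ]
    exact neg_ne_zero.mpr one_ne_zero
  · exact gaussSum_ne_zero_of_nontrivial (Nat.cast_ne_zero.mpr Fintype.card_ne_zero) hψ
      (AddChar.IsPrimitive.of_ne_one hθ)

theorem gaussSum_div_gaussSum_inv (hθ : θ ≠ 1) {X Y : MulChar F K} (hY : Y ≠ 1)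
    (hXY : X * Y ≠ 1) :
    gaussSum X θ / gaussSum Y⁻¹ θ =
      Y (-1) * gaussSum (X * Y) θ * jacobiSum X Y / Fintype.card F := by
  have h_sq : Y (-1) * Y (-1) = 1 := by rw [← map_mul, neg_mul_neg, one_mul, map_one]
  rw [div_eq_div_iff (gaussSum_ne_zero hθ _) (Nat.cast_ne_zero.mpr Fintype.card_ne_zero),
    mul_assoc (Y (-1)), jacobiSum_mul_nontrivial hXY, mul_assoc, mul_assoc,
    gaussSum_mul_gaussSum_inv hθ hY]
  linear_combination -gaussSum X θ * Fintype.card F * h_sq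

/-- The Hasse–Davenport product formula for the quadratic character. -/
theorem apply_four_mul_gaussSum_mul_gaussSum (hθ : θ ≠ 1) (hφ : orderOf φ = 2)
    (ψ : MulChar F K) :
    ψ 4 * (gaussSum ψ θ * gaussSum (φ * ψ) θ) = gaussSum φ θ * gaussSum (ψ ^ 2) θ := by
  rcases eq_or_ne ψ 1 with rfl | hψ
  · rw [MulChar.one_apply (isUnit_four_of_orderOf_eq_two hφ), one_pow, mul_one, one_mul, mul_comm]
  by_cases h_sq : ψ ^ 2 = 1
  · obtain rfl : φ = ψ := eq_of_orderOf_eq_two hφ (orderOf_eq_prime h_sq hψ)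
    rw [show (4 : F) = 2 ^ 2 by norm_num,
      quadratic_apply_sq hφ (two_ne_zero_of_orderOf_eq_two hφ), one_mul, sq]
  · have h_mul : φ * ψ ≠ 1 := fun h => h_sq <| by
      rw [← one_pow 2, ← h, mul_pow, sq φ, mul_self_eq_one_of_orderOf_eq_two hφ, one_mul]
    apply mul_left_cancel₀ (gaussSum_ne_zero hθ ψ)
    calc gaussSum ψ θ * (ψ 4 * (gaussSum ψ θ * gaussSum (φ * ψ) θ))
        = ψ 4 * (gaussSum ψ θ * gaussSum ψ θ) * gaussSum (φ * ψ) θ := by ring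
      _ = gaussSum (ψ ^ 2) θ * (gaussSum (φ * ψ) θ * (ψ 4 * jacobiSum ψ ψ)) := by
          rw [← jacobiSum_mul_nontrivial (sq ψ ▸ h_sq), ← sq]
          ring
      _ = gaussSum ψ θ * (gaussSum φ θ * gaussSum (ψ ^ 2) θ) := by
          rw [apply_four_mul_jacobiSum_self hφ hψ, jacobiSum_mul_nontrivial h_mul]
          ring

/-- The Gauss sums of the upper parameters `χX, χ⁻¹X` and of the inverse lower parameters
`X⁻¹, (φX)⁻¹`; the summand of the hypergeometric function is a product of ratios of such blocks. -/
noncomputable def gaussSumBlock (θ : AddChar F K) (φ χ X : MulChar F K) : K :=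
  gaussSum (χ * X) θ * gaussSum (χ⁻¹ * X) θ * (gaussSum X⁻¹ θ * gaussSum (φ * X)⁻¹ θ)

theorem gaussSumBlock_eq (hθ : θ ≠ 1) (hφ : orderOf φ = 2) (hχ : χ ^ 2 = φ) (X : MulChar F K) :
    gaussSumBlock θ φ χ X =
      gaussSum φ θ ^ 3 / χ 4 * jacobiSum (φ * X ^ 2) (X ^ 2)⁻¹ := by
  have h4 : IsUnit (4 : F) := isUnit_four_of_orderOf_eq_two hφ
  have h_inv : φ * χ = χ⁻¹ := by
    rw [eq_inv_iff_mul_eq_one, mul_assoc, ← sq, hχ, mul_self_eq_one_of_orderOf_eq_two hφ]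
  have h_upper := apply_four_mul_gaussSum_mul_gaussSum hθ hφ (χ * X)
  have h_lower := apply_four_mul_gaussSum_mul_gaussSum hθ hφ X⁻¹
  rw [← mul_assoc φ, h_inv, mul_pow, hχ, MulChar.mul_apply] at h_upper
  have h_jacobi := jacobiSum_mul_nontrivial (χ := φ * X ^ 2) (φ := (X ^ 2)⁻¹)
    (by simpa only [mul_inv_cancel_right] using ne_one_of_orderOf_eq_two hφ) θ
  rw [mul_inv_cancel_right] at h_jacobi
  have h_one : X 4 * X⁻¹ 4 = 1 := by
    rw [← MulChar.mul_apply, mul_inv_cancel, MulChar.one_apply h4]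
  rw [inv_pow] at h_lower
  rw [gaussSumBlock, mul_inv, inv_eq_self_of_orderOf_eq_two hφ, div_mul_eq_mul_div,
    eq_div_iff (h4.map χ).ne_zero]
  calc _ = (χ 4 * X 4 * (gaussSum (χ * X) θ * gaussSum (χ⁻¹ * X) θ)) *
          (X⁻¹ 4 * (gaussSum X⁻¹ θ * gaussSum (φ * X⁻¹) θ)) := by
        linear_combination -(gaussSum (χ * X) θ * gaussSum (χ⁻¹ * X) θ *
          (gaussSum X⁻¹ θ * gaussSum (φ * X⁻¹) θ)) * χ 4 * h_one
    _ = gaussSum φ θ ^ 2 * (gaussSum (φ * X ^ 2) θ * gaussSum (X ^ 2)⁻¹ θ) := by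
        rw [h_upper, h_lower]
        ring
    _ = gaussSum φ θ ^ 3 * jacobiSum (φ * X ^ 2) (X ^ 2)⁻¹ := by
        rw [← h_jacobi]
        ring

theorem gaussSumBlock_div_gaussSumBlock (hθ : θ ≠ 1) (hφ : orderOf φ = 2) (hχ : χ ^ 2 = φ)
    (X Y : MulChar F K) :
    gaussSumBlock θ φ χ X / gaussSumBlock θ φ χ Y =
      jacobiSum (φ * X ^ 2) (X ^ 2)⁻¹ / jacobiSum (φ * Y ^ 2) (Y ^ 2)⁻¹ := by
  have h4 : χ 4 ≠ 0 := ((isUnit_four_of_orderOf_eq_two hφ).map χ).ne_zero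
  simp only [gaussSumBlock_eq hθ hφ hχ]
  exact mul_div_mul_left _ _ (div_ne_zero (pow_ne_zero 3 (gaussSum_ne_zero hθ φ)) h4)

theorem jacobiSum_quadratic_mul_inv_mul_jacobiSum_inv (hφ : orderOf φ = 2) {B : MulChar F K}
    (hB : B ≠ 1) (hφB : φ * B ≠ 1) :
    jacobiSum (φ * B) B⁻¹ * jacobiSum (φ * B⁻¹) B = Fintype.card F := by
  have h_char : ringChar K ≠ ringChar F := by
    rw [ringChar.eq_zero]
    exact (CharP.char_ne_zero_of_finite F (ringChar F)).symm
  have h := jacobiSum_mul_jacobiSum_inv h_char hφB (inv_ne_one.mpr hB)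
    (by simpa only [mul_inv_cancel_right] using ne_one_of_orderOf_eq_two hφ)
  rwa [mul_inv, inv_eq_self_of_orderOf_eq_two hφ, inv_inv] at h

theorem gaussSum_mul_gaussSum_div_sq_of_sq_eq (hθ : θ ≠ 1) (hφ : orderOf φ = 2)
    {R : MulChar F K} (hR : R ^ 2 = φ) (B : MulChar F K) :
    gaussSum (R * B) θ * gaussSum (R * B⁻¹) θ / gaussSum R⁻¹ θ ^ 2 =
      jacobiSum (R * B) (R * B⁻¹) * jacobiSum R R / Fintype.card F := by
  have hφ1 : φ ≠ 1 := ne_one_of_orderOf_eq_two hφ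
  have hR1 : R ≠ 1 := by
    rintro rfl
    exact hφ1 (hR ▸ one_pow 2)
  have h_sq : R * R = φ := by rw [← sq, hR]
  have h_mul : R * B * (R * B⁻¹) = φ := by
    rw [mul_mul_mul_comm, mul_inv_cancel, mul_one, h_sq]
  have h_RB := jacobiSum_mul_nontrivial (h_mul ▸ hφ1) θ
  have h_R := gaussSum_div_gaussSum_inv hθ hR1 (h_sq ▸ hφ1)
  rw [h_mul] at h_RB
  rw [h_sq] at h_R
  have h_inv := gaussSum_mul_gaussSum_inv hθ hR1
  have h_card := gaussSum_sq_of_orderOf_eq_two hθ hφ (apply_neg_one_of_sq_eq hR)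
  have h_neg : R (-1) ≠ 0 := (isUnit_one.neg.map R).ne_zero
  have hq : (Fintype.card F : K) ≠ 0 := Nat.cast_ne_zero.mpr Fintype.card_ne_zero
  calc gaussSum (R * B) θ * gaussSum (R * B⁻¹) θ / gaussSum R⁻¹ θ ^ 2
      = jacobiSum (R * B) (R * B⁻¹) * gaussSum φ θ * (gaussSum R θ / gaussSum R⁻¹ θ) /
          (gaussSum R θ * gaussSum R⁻¹ θ) := by
        have h_R_ne := gaussSum_ne_zero hθ R
        have h_inv_ne := gaussSum_ne_zero hθ R⁻¹
        rw [← h_RB]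
        field_simp
    _ = gaussSum φ θ ^ 2 * jacobiSum (R * B) (R * B⁻¹) * jacobiSum R R /
          (Fintype.card F * Fintype.card F) := by
        rw [h_R, h_inv]
        field_simp
    _ = _ := by
        rw [h_card]
        field_simp

theorem gaussSum_mul_div_gaussSum_inv_mul (hθ : θ ≠ 1) (hφ : orderOf φ = 2) (h_neg : φ (-1) = 1)
    {X Y Z W : MulChar F K} (hY : Y ≠ 1) (hW : W ≠ 1) (hXY : X * Y = φ) (hZW : Z * W = φ)
    (h_sign : (Y * W) (-1) = 1) :
    gaussSum X θ * gaussSum Z θ / (gaussSum Y⁻¹ θ * gaussSum W⁻¹ θ) =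
      jacobiSum X Y * jacobiSum Z W / Fintype.card F := by
  have hφ1 : φ ≠ 1 := ne_one_of_orderOf_eq_two hφ
  have hq : (Fintype.card F : K) ≠ 0 := Nat.cast_ne_zero.mpr Fintype.card_ne_zero
  rw [MulChar.mul_apply] at h_sign
  rw [mul_div_mul_comm, gaussSum_div_gaussSum_inv hθ hY (hXY ▸ hφ1),
    gaussSum_div_gaussSum_inv hθ hW (hZW ▸ hφ1), hXY, hZW]
  calc _ = Y (-1) * W (-1) * gaussSum φ θ ^ 2 * (jacobiSum X Y * jacobiSum Z W) /
          (Fintype.card F * Fintype.card F) := by ring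
    _ = jacobiSum X Y * jacobiSum Z W / Fintype.card F := by
        rw [h_sign, one_mul, gaussSum_sq_of_orderOf_eq_two hθ hφ h_neg,
          mul_div_mul_left _ _ hq]

theorem gaussSum_mul_div_of_sq_eq (hθ : θ ≠ 1) (hφ : orderOf φ = 2) (hχ : χ ^ 2 = φ)
    {S A : MulChar F K} (hS : S ^ 2 = χ) (hA : A ^ 8 ≠ 1) :
    gaussSum (S * A) θ * gaussSum (χ * S * A) θ /
        (gaussSum (φ * S * A) θ * gaussSum (χ⁻¹ * S * A) θ) =
      jacobiSum (S * A) (S ^ 3 * A⁻¹) * jacobiSum (S ^ 3 * A) (S * A⁻¹) / Fintype.card F := by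
  have hS4 : S ^ 4 = φ := by rw [← hχ, ← hS, ← pow_mul]
  have hS8 : S ^ 8 = 1 := by
    rw [show 8 = 4 * 2 from rfl, pow_mul, hS4, ← hφ, pow_orderOf_eq_one]
  have h_ne : ∀ k, S ^ k * A⁻¹ ≠ 1 := fun k h => hA <| by
    rw [← mul_inv_eq_one.mp h, ← pow_mul, mul_comm, pow_mul, hS8, one_pow]
  have h_left : S * A * (S ^ 3 * A⁻¹) = φ := by
    rw [mul_mul_mul_comm, mul_inv_cancel, mul_one, ← pow_succ', hS4]
  have h_right : S ^ 3 * A * (S * A⁻¹) = φ := by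
    rw [mul_mul_mul_comm, mul_inv_cancel, mul_one, ← pow_succ, hS4]
  have h_left_inv : φ * S * A = (S ^ 3 * A⁻¹)⁻¹ := by
    rw [eq_inv_iff_mul_eq_one, mul_assoc φ, mul_assoc φ, h_left,
      mul_self_eq_one_of_orderOf_eq_two hφ]
  have h_right_inv : χ⁻¹ * S * A = (S * A⁻¹)⁻¹ := by
    rw [mul_inv, inv_inv, ← hS, sq, mul_inv, inv_mul_cancel_right]
  have h_sign : (S ^ 3 * A⁻¹ * (S * A⁻¹)) (-1) = 1 := by
    refine apply_neg_one_of_sq_eq (χ := S ^ 2 * A⁻¹) ?_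
    rw [mul_mul_mul_comm, mul_pow, ← pow_mul, ← pow_succ, sq A⁻¹]
  rw [h_left_inv, h_right_inv, ← hS, ← pow_succ]
  exact gaussSum_mul_div_gaussSum_inv_mul hθ hφ (apply_neg_one_of_sq_eq hχ) (h_ne 3)
    (by simpa only [pow_one] using h_ne 1) h_left h_right h_sign

end GaussSums

/-! ### The hypergeometric function -/

section Hypergeometric

variable {F : Type} [Field F] [Fintype F] {θ : AddChar F ℂ} {φ χ A : MulChar F ℂ}

theorem gaussSum_ratio_prod_eq_jacobiSum_triple (hθ : θ ≠ 1) (hφ : orderOf φ = 2)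
    (hχ : χ ^ 2 = φ) (hA : A ^ 2 ≠ 1) (hφA : φ * A ^ 2 ≠ 1) (ψ : MulChar F ℂ) :
    ∏ i, gaussSum (![χ, χ⁻¹, χ * A, χ⁻¹ * A, χ * A⁻¹, χ⁻¹ * A⁻¹] i * ψ) θ /
          gaussSum (![χ, χ⁻¹, χ * A, χ⁻¹ * A, χ * A⁻¹, χ⁻¹ * A⁻¹] i) θ *
        (gaussSum (![1, φ, A⁻¹, φ * A⁻¹, A, φ * A] i * ψ)⁻¹ θ /
          gaussSum (![1, φ, A⁻¹, φ * A⁻¹, A, φ * A] i)⁻¹ θ) =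
      -(jacobiSum (φ * ψ ^ 2) (ψ ^ 2)⁻¹ *
        (jacobiSum (φ * (A ^ 2 * ψ ^ 2)) (A ^ 2 * ψ ^ 2)⁻¹ *
          jacobiSum (φ * ((A ^ 2)⁻¹ * ψ ^ 2)) ((A ^ 2)⁻¹ * ψ ^ 2)⁻¹)) / Fintype.card F := by
  have h_one : jacobiSum (φ * 1 ^ 2) ((1 : MulChar F ℂ) ^ 2)⁻¹ = -1 := by
    rw [one_pow, inv_one, mul_one, jacobiSum_comm,
      jacobiSum_one_nontrivial (ne_one_of_orderOf_eq_two hφ)]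
  have h_card := jacobiSum_quadratic_mul_inv_mul_jacobiSum_inv hφ hA hφA
  calc _ = gaussSumBlock θ φ χ ψ / gaussSumBlock θ φ χ 1 *
          (gaussSumBlock θ φ χ (A * ψ) / gaussSumBlock θ φ χ A *
            (gaussSumBlock θ φ χ (A⁻¹ * ψ) / gaussSumBlock θ φ χ A⁻¹)) := by
        simp only [Fin.prod_univ_six, Matrix.cons_val, gaussSumBlock, mul_one, one_mul, ← mul_assoc,
          div_eq_mul_inv, mul_inv, inv_one]
        ring
    _ = _ := by
        simp only [gaussSumBlock_div_gaussSumBlock hθ hφ hχ, h_one, mul_pow, inv_pow, inv_inv]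
        rw [div_mul_div_comm, div_mul_div_comm, h_card, neg_one_mul, div_neg, neg_div]

theorem ffHyp_eq_sum_jacobiSum_triple (hθ : θ ≠ 1) (hφ : orderOf φ = 2)
    (hχ : χ ^ 2 = φ) (hA : A ^ 2 ≠ 1) (hφA : φ * A ^ 2 ≠ 1) [DecidableEq F]
    [Fintype (MulChar F ℂ)] :
    ffHyp θ ![χ, χ⁻¹, χ * A, χ⁻¹ * A, χ * A⁻¹, χ⁻¹ * A⁻¹] ![1, φ, A⁻¹, φ * A⁻¹, A, φ * A] 1 =
      (∑ ψ : MulChar F ℂ, jacobiSum (φ * ψ ^ 2) (ψ ^ 2)⁻¹ *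
        (jacobiSum (φ * (A ^ 2 * ψ ^ 2)) (A ^ 2 * ψ ^ 2)⁻¹ *
          jacobiSum (φ * ((A ^ 2)⁻¹ * ψ ^ 2)) ((A ^ 2)⁻¹ * ψ ^ 2)⁻¹)) /
        (Fintype.card Fˣ * Fintype.card F) := by
  have h_sign : ∀ ψ : MulChar F ℂ, ψ (-1) ^ Fintype.card (Fin 6) = 1 := fun ψ => by
    rw [← map_pow, Fintype.card_fin, Even.neg_one_pow (by decide), map_one]
  rw [ffHyp]
  simp only [gaussSum_ratio_prod_eq_jacobiSum_triple hθ hφ hχ hA hφA, h_sign, map_one, mul_one,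
    ← Finset.sum_div, Finset.sum_neg_distrib]
  rw [Fintype.card_units, Nat.cast_sub Fintype.card_pos, Nat.cast_one, div_mul_div_comm,
    neg_one_mul, neg_neg]
  congr!

end Hypergeometric

open scoped Classical in
theorem stmt10 {F : Type} [Field F] [Fintype F] (hq : Fintype.card F % 4 = 1)
    (θ : AddChar F ℂ) (hθ : θ ≠ 1)
    (φ : MulChar F ℂ) (hφ : orderOf φ = 2)
    (χ₄ : MulChar F ℂ) (hχ₄ : orderOf χ₄ = 4)
    (A : MulChar F ℂ) (hA : A ^ 8 ≠ 1) :
    letI : Fintype (MulChar F ℂ) := Fintype.ofFinite _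
    ffHyp θ ![χ₄, χ₄⁻¹, χ₄ * A, χ₄⁻¹ * A, χ₄ * A⁻¹, χ₄⁻¹ * A⁻¹]
        ![1, φ, A⁻¹, φ * A⁻¹, A, φ * A] 1
      = 1
        + ∑ R ∈ Finset.univ.filter (fun R : MulChar F ℂ => R ^ 2 = φ),
            gaussSum (R⁻¹ * φ * A ^ 2) θ * gaussSum (R⁻¹ * φ * A⁻¹ ^ 2) θ /
              gaussSum R⁻¹ θ ^ 2
        + (if Fintype.card F % 8 = 1 then
            ∑ S ∈ Finset.univ.filter (fun S : MulChar F ℂ => S ^ 2 = χ₄),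
              gaussSum (S * A) θ * gaussSum (χ₄ * S * A) θ /
                (gaussSum (φ * S * A) θ * gaussSum (χ₄⁻¹ * S * A) θ)
          else 0) := by
  let : Fintype (MulChar F ℂ) := Fintype.ofFinite _
  change ffHyp θ _ _ 1 = _
  have hχ : χ₄ ^ 2 = φ :=
    eq_of_orderOf_eq_two (by rw [orderOf_pow_of_dvd two_ne_zero (by norm_num [hχ₄]), hχ₄]) hφ
  have hA₂ : A ^ 2 ≠ 1 := fun h => hA (by rw [show 8 = 2 * 4 from rfl, pow_mul, h, one_pow])
  have hφA : φ * A ^ 2 ≠ 1 := fun h => hA <| by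
    rw [show 8 = 2 * 4 from rfl, pow_mul, ← inv_eq_of_mul_eq_one_right h, inv_pow, ← hχ, ← pow_mul,
      mul_comm 2 4, pow_mul, ← hχ₄, pow_orderOf_eq_one, one_pow, inv_one]
  have hq₀ : (Fintype.card F : ℂ) ≠ 0 := Nat.cast_ne_zero.mpr Fintype.card_ne_zero
  have hu₀ : (Fintype.card Fˣ : ℂ) ≠ 0 := Nat.cast_ne_zero.mpr Fintype.card_ne_zero
  rw [ffHyp_eq_sum_jacobiSum_triple hθ hφ hχ hA₂ hφA,
    sum_jacobiSum_triple hφ hχ (mul_comm φ _ ▸ hφA), mul_div_mul_left _ _ hu₀, add_div, add_div,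
    div_self hq₀, Finset.sum_div, Finset.sum_div]
  congr 1
  · refine congrArg (1 + ·) (Finset.sum_congr rfl fun R hR => ?_)
    have hR : R ^ 2 = φ := (Finset.mem_filter.mp hR).2
    rw [← gaussSum_mul_gaussSum_div_sq_of_sq_eq hθ hφ hR, ← hR, sq R, inv_mul_cancel_left, inv_pow]
  · rw [ite_eq_left_iff.mpr fun h => ?_]
    · refine Finset.sum_congr rfl fun S hS => ?_
      rw [gaussSum_mul_div_of_sq_eq hθ hφ hχ (Finset.mem_filter.mp hS).2 hA]
    · refine (Finset.sum_eq_zero fun S hS => absurd ?_ h).symm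
      exact card_mod_eight_eq_one_of_sq_sq_eq hφ hχ (Finset.mem_filter.mp hS).2
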